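/- Let (A, [-,-,-]₁, [-,-,-]₂) be a compatible ternary Leibniz algebra over a field K and β : A → A an injective averaging operator for both brackets. Define [x,y,z]ᵢᵝ := [β(x),β(y),z]ᵢ for i = 1,2. Then (A, [-,-,-]₁ᵝ, [-,-,-]₂ᵝ) is a compatible ternary Leibniz algebra. Moreover, β is a morphism of ternary Leibniz algebras from (A, [-,-,-]ᵝ) to (A, [-,-,-]), where [-,-,-] := [-,-,-]₁ + [-,-,-]₂ and [-,-,-]ᵝ := [-,-,-]₁ᵝ + [-,-,-]₂ᵝ; that is, β([x,y,z]ᵝ) = [β(x),β(y),β(z)] for all x,y,z ∈ A. -/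

import Mathlib

variable {K : Type*} [Field K] {A : Type*} [AddCommGroup A] [Module K A]

/-- The (right) ternary Leibniz identity for a ternary bracket. -/
def TernaryLeibnizId (b : A → A → A → A) : Prop :=
  ∀ x y z t u : A,
    b (b x y z) t u = b x y (b z t u) + b x (b y t u) z + b (b x t u) y z

/-- Compatibility of two ternary brackets. -/
def TernaryCompat (b₁ b₂ : A → A → A → A) : Prop :=
  ∀ x y z t u : A,
    b₂ (b₁ x y z) t u + b₁ (b₂ x y z) t u =
      b₂ x y (b₁ z t u) + b₁ x y (b₂ z t u) + b₂ x (b₁ y t u) z + b₁ x (b₂ y t u) z +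
        b₂ (b₁ x t u) y z + b₁ (b₂ x t u) y z

/-- An averaging operator on a ternary Leibniz algebra. -/
def IsTernaryAveraging (t : A → A → A → A) (β : A → A) : Prop :=
  ∀ x y z : A,
    β (t (β x) (β y) z) = t (β x) (β y) (β z) ∧
      β (t (β x) y (β z)) = t (β x) (β y) (β z) ∧
      β (t x (β y) (β z)) = t (β x) (β y) (β z)

/-- Let `(A, [-,-,-]₁, [-,-,-]₂)` be a compatible ternary Leibniz algebra and `β` an injective
averaging operator for both brackets. Then `[x,y,z]ᵢᵝ := [β(x),β(y),z]ᵢ` define a compatible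
ternary Leibniz algebra, and `β` is a morphism of ternary Leibniz algebras from
`(A, [-,-,-]₁ᵝ + [-,-,-]₂ᵝ)` to `(A, [-,-,-]₁ + [-,-,-]₂)`. -/
theorem averaging_compatible_ternary_both (t₁ t₂ : A →ₗ[K] A →ₗ[K] A →ₗ[K] A)
    (h₁ : TernaryLeibnizId fun x y z => t₁ x y z)
    (h₂ : TernaryLeibnizId fun x y z => t₂ x y z)
    (hc : TernaryCompat (fun x y z => t₁ x y z) (fun x y z => t₂ x y z))
    (β : A →ₗ[K] A) (hinj : Function.Injective β)
    (hav₁ : IsTernaryAveraging (fun x y z => t₁ x y z) β)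
    (hav₂ : IsTernaryAveraging (fun x y z => t₂ x y z) β) :
    TernaryLeibnizId (fun x y z => t₁ (β x) (β y) z) ∧
      TernaryLeibnizId (fun x y z => t₂ (β x) (β y) z) ∧
      TernaryCompat (fun x y z => t₁ (β x) (β y) z)
        (fun x y z => t₂ (β x) (β y) z) ∧
      ∀ x y z : A,
        β (t₁ (β x) (β y) z + t₂ (β x) (β y) z) =
          t₁ (β x) (β y) (β z) + t₂ (β x) (β y) (β z) := by
  have e₁ : ∀ x y z, β (t₁ (β x) (β y) z) = t₁ (β x) (β y) (β z) := fun x y z => (hav₁ x y z).1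
  have e₂ : ∀ x y z, β (t₂ (β x) (β y) z) = t₂ (β x) (β y) (β z) := fun x y z => (hav₂ x y z).1
  refine ⟨fun x y z t u => hinj ?_, fun x y z t u => hinj ?_, fun x y z t u => hinj ?_,
    fun x y z => ?_⟩
  · have h := h₁ (β x) (β y) (β z) (β t) (β u)
    simp only [map_add]
    simp only [↓e₁]
    exact h
  · have h := h₂ (β x) (β y) (β z) (β t) (β u)
    simp only [map_add]
    simp only [↓e₂]
    exact h
  · have h := hc (β x) (β y) (β z) (β t) (β u)
    simp only [map_add]
    simp only [↓e₁, ↓e₂]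
    exact h
  · rw [map_add, e₁, e₂]
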